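/- For h ≥ 2, m ≥ 2 and k ≥ h+1, the PFA P_{h,m}^n on n = (m+1)k states is carefully synchronizing, and its shortest carefully synchronizing word has length at least f_{h,m}(k), where f_{h,m}(k) = 0 for 1 ≤ k ≤ h and f_{h,m}(k) = (m−1)·(1 + Σ_{j=1}^{h} f_{h,m}(k−j)) for k ≥ h+1. -/

import Mathlib

/-- One step of a PFA on an `Option` state. -/
def pfaStep {Q σ : Type*} (δ : Q → σ → Option Q) (o : Option Q) (a : σ) : Option Q :=
  o.bind fun q => δ q a

/-- The (partial) state reached from `q` after reading word `w` in the PFA `δ`. -/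
def pfaRun {Q σ : Type*} (δ : Q → σ → Option Q) (q : Q) (w : List σ) : Option Q :=
  w.foldl (pfaStep δ) (some q)

/-- A word `w` is carefully synchronizing for the PFA `δ`. -/
def IsCareSyncWord {Q σ : Type*} (δ : Q → σ → Option Q) (w : List σ) : Prop :=
  ∃ qs : Q, ∀ q : Q, pfaRun δ q w = some qs

/-- The three symbols `s`, `r`, `c` of the PFA `P_{h,m}^n`. -/
inductive PSym : Type
  | s
  | r
  | c
  deriving DecidableEq

/-- The PFA `P_{h,m}^n` on `n = (m+1)k` states.  A state `(t, i)` with `t < m`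
represents `A_{i+1}^{(t+1)}`, and `(t, i)` with `t = m` represents `C_{i+1}`. -/
def PHMdelta (h m k : ℕ) (hh : 2 ≤ h) (hm : 2 ≤ m) (hk : h + 1 ≤ k) :
    Fin (m + 1) × Fin k → PSym → Option (Fin (m + 1) × Fin k) := fun q x =>
  match x with
  | PSym.s =>
      -- X_i s = C_i for i = 1,…,h and X_i s = A_i^{(1)} otherwise
      if q.2.val < h then some (⟨m, by omega⟩, q.2) else some (⟨0, by omega⟩, q.2)
  | PSym.c =>
      -- cyclic shift of the index
      some (q.1, ⟨(q.2.val + 1) % k, Nat.mod_lt _ (by omega)⟩)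
  | PSym.r =>
      if q.2.val < h then
        -- i = 1,…,h : A_i^{(t)} r undefined for t ≤ m−1, A_i^{(m)} r = A_i^{(1)}, C_i r = C_i
        (if q.1.val = m then some q
         else if q.1.val = m - 1 then some (⟨0, by omega⟩, q.2)
         else none)
      else if q.2.val = h then
        -- i = h+1 : A^{(t)} ↦ A^{(t+1)} for t ≤ m−1, A^{(m)} r undefined, C ↦ A_h^{(m)}
        (if hq0 : q.1.val = m then some (⟨m - 1, by omega⟩, ⟨h - 1, by omega⟩)
         else if hq1 : q.1.val = m - 1 then none
         else some (⟨q.1.val + 1, by have := q.1.isLt; omega⟩, q.2))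
      else some q

/-
The word `s` leaves one token at each index. The tokens at the first `h` indices are in states `C`;
the other `k - h` act as digits of a counter in base `m`. The symbol `c` rotates the tokens, and `r`
increments the digit standing at index `h + 1`, provided that all digits standing at the first `h`
indices equal `m - 1`; these are reset to `0`. Numbering the tokens from `0`, give the digit `i` the
weight `1 + ∑ f (i + 1 - t)`, the sum being over `1 ≤ t ≤ h`. As `f (i + 1)` is `m - 1` times this
weight, an increment adds what the resets remove plus one, so every `r` raises the value of the
counter by exactly one. Two tokens can only meet after `r` was applied with a `C` at index `h + 1`.
The last digit then stands among the first `h` indices, so it equals `m - 1` and contributes `f k`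
to the value. Applying `s` earlier merely restarts the counter.

Conversely, `s` followed by suitable rotations and increments fills the counter. Now `c` and then
`r` advance every token by one index, except that the token `C_h` returns to the index `h`. After
`k` repetitions of this word all tokens stand at that index, and `s` merges them.
-/

section PartialRuns

variable {Q σ : Type*} {δ : Q → σ → Option Q}

theorem foldl_pfaStep_none (w : List σ) : w.foldl (pfaStep δ) none = none := by
  induction w with
  | nil => rfl
  | cons _ _ ih => exact ih

theorem pfaRun_nil (q : Q) : pfaRun δ q [] = some q := rfl

theorem pfaRun_append (q : Q) (u v : List σ) :
    pfaRun δ q (u ++ v) = (pfaRun δ q u).bind fun p => pfaRun δ p v := by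
  unfold pfaRun
  rw [List.foldl_append]
  cases List.foldl (pfaStep δ) (some q) u with
  | none => exact foldl_pfaStep_none v
  | some p => rfl

theorem pfaRun_cons (q : Q) (a : σ) (w : List σ) :
    pfaRun δ q (a :: w) = (δ q a).bind fun p => pfaRun δ p w :=
  pfaRun_append q [a] w

theorem pfaRun_map {Q' : Type*} {δ' : Q' → σ → Option Q'} {φ : Q → Q'}
    (hφ : ∀ q a, δ' (φ q) a = (δ q a).map φ) (q : Q) (w : List σ) :
    pfaRun δ' (φ q) w = (pfaRun δ q w).map φ := by
  induction w generalizing q with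
  | nil => rfl
  | cons a w ih =>
    rw [pfaRun_cons, pfaRun_cons, hφ]
    cases δ q a with
    | none => rfl
    | some p => exact ih p

theorem pfaRun_flatten_replicate_map {P : Type*} {π : Q → P} {g : P → P} {D : Set P}
    (hg : Set.MapsTo g D D) {w : List σ}
    (hw : ∀ q, π q ∈ D → (pfaRun δ q w).map π = some (g (π q))) (n : ℕ) {q : Q} (hq : π q ∈ D) :
    (pfaRun δ q (List.replicate n w).flatten).map π = some (g^[n] (π q)) := by
  induction n generalizing q with
  | zero => rfl
  | succ n ih =>
    obtain ⟨p, hp, hpq⟩ := Option.map_eq_some_iff.1 (hw q hq)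
    rw [List.replicate_succ, List.flatten_cons, pfaRun_append, hp, Option.bind_some,
      ih (hpq ▸ hg hq), hpq, Function.iterate_succ_apply]

/-- The word `w` is defined on every state of `S` and sends them all to one state. -/
def IsCareSyncWordOn (δ : Q → σ → Option Q) (S : Set Q) (w : List σ) : Prop :=
  ∃ p, ∀ q ∈ S, pfaRun δ q w = some p

namespace IsCareSyncWordOn

variable {S S' : Set Q} {a : σ} {w : List σ}

theorem mono (hw : IsCareSyncWordOn δ S w) (hS : S' ⊆ S) : IsCareSyncWordOn δ S' w :=
  hw.imp fun _ hp q hq => hp q (hS hq)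

theorem subsingleton (hS : IsCareSyncWordOn δ S []) : S.Subsingleton := by
  obtain ⟨p, hp⟩ := hS
  exact fun q hq q' hq' => Option.some.inj ((hp q hq).trans (hp q' hq').symm)

theorem isSome (hw : IsCareSyncWordOn δ S (a :: w)) {q : Q} (hq : q ∈ S) : (δ q a).isSome := by
  obtain ⟨p, hp⟩ := hw
  have hrun := hp q hq
  rw [pfaRun_cons, Option.bind_eq_some_iff] at hrun
  obtain ⟨q', hq', -⟩ := hrun
  exact Option.isSome_of_eq_some hq'

theorem tail (hw : IsCareSyncWordOn δ S (a :: w)) (hS : ∀ q' ∈ S', ∃ q ∈ S, δ q a = some q') :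
    IsCareSyncWordOn δ S' w := by
  obtain ⟨p, hp⟩ := hw
  refine ⟨p, fun q' hq' => ?_⟩
  obtain ⟨q, hq, hqq'⟩ := hS q' hq'
  rw [← hp q hq, pfaRun_cons, hqq', Option.bind_some]

end IsCareSyncWordOn

theorem isCareSyncWord_iff_range [Nonempty Q] {Q' : Type*} {δ' : Q' → σ → Option Q'} {φ : Q → Q'}
    (hφ : ∀ q a, δ' (φ q) a = (δ q a).map φ) (hinj : Function.Injective φ) (w : List σ) :
    IsCareSyncWord δ w ↔ IsCareSyncWordOn δ' (Set.range φ) w := by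
  simp only [IsCareSyncWordOn, Set.forall_mem_range, pfaRun_map hφ]
  constructor
  · rintro ⟨p, hp⟩
    exact ⟨φ p, fun q => by rw [hp, Option.map_some]⟩
  · rintro ⟨p', hp'⟩
    obtain ⟨p, -, rfl⟩ := Option.map_eq_some_iff.1 (hp' (Classical.arbitrary Q))
    exact ⟨p, fun q => Option.map_injective hinj (hp' q)⟩

end PartialRuns

section NaturalModel

/-- The transition function `PHMdelta` read on pairs of natural numbers, so that levels and indices
are compared and added without bound proofs. -/
def phmNatDelta (h m k : ℕ) (q : ℕ × ℕ) : PSym → Option (ℕ × ℕ)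
  | PSym.s => some (if q.2 < h then m else 0, q.2)
  | PSym.c => some (q.1, (q.2 + 1) % k)
  | PSym.r =>
      if q.2 < h then
        if q.1 = m then some q else if q.1 = m - 1 then some (0, q.2) else none
      else if q.2 = h then
        if q.1 = m then some (m - 1, h - 1)
        else if q.1 = m - 1 then none else some (q.1 + 1, q.2)
      else some q

theorem phmNatDelta_map_val (h m k : ℕ) (hh : 2 ≤ h) (hm : 2 ≤ m) (hk : h + 1 ≤ k)
    (q : Fin (m + 1) × Fin k) (x : PSym) :
    phmNatDelta h m k (Prod.map Fin.val Fin.val q) x =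
      (PHMdelta h m k hh hm hk q x).map (Prod.map Fin.val Fin.val) := by
  cases x with
  | c => rfl
  | s => simp only [phmNatDelta, PHMdelta, Prod.map]; split_ifs <;> rfl
  | r => simp only [phmNatDelta, PHMdelta, Prod.map]; split_ifs <;> rfl

theorem isCareSyncWord_PHMdelta_iff (h m k : ℕ) (hh : 2 ≤ h) (hm : 2 ≤ m) (hk : h + 1 ≤ k)
    (w : List PSym) :
    IsCareSyncWord (PHMdelta h m k hh hm hk) w ↔
      IsCareSyncWordOn (phmNatDelta h m k) (Set.Iio (m + 1) ×ˢ Set.Iio k) w := by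
  have : NeZero k := ⟨by omega⟩
  rw [isCareSyncWord_iff_range (phmNatDelta_map_val h m k hh hm hk)
    (Fin.val_injective.prodMap Fin.val_injective), Set.range_prodMap, Fin.range_val, Fin.range_val]

variable {h m k t x : ℕ}

theorem isSome_phmNatDelta_r_of_lt (ht : t < m) (hx : x < h) :
    (phmNatDelta h m k (t, x) PSym.r).isSome ↔ t = m - 1 := by
  simp only [phmNatDelta, if_pos hx, if_neg ht.ne]
  split_ifs with htop <;> simp [htop]

theorem isSome_phmNatDelta_r_self (ht : t < m) :
    (phmNatDelta h m k (t, h) PSym.r).isSome ↔ t + 1 < m := by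
  simp only [phmNatDelta, lt_irrefl, if_false, if_true, if_neg ht.ne]
  split_ifs with htop <;> simp <;> omega

end NaturalModel

section Rotation

variable {k o i j h : ℕ}

theorem exists_add_mod_eq (hi : i < k) (o : ℕ) : ∃ j < k, (j + o) % k = i := by
  refine ⟨(i + (k - o % k)) % k, Nat.mod_lt _ (by omega), ?_⟩
  have ho : o % k < k := Nat.mod_lt _ (by omega)
  rw [Nat.mod_add_mod, ← Nat.add_mod_mod, Nat.add_assoc, Nat.sub_add_cancel ho.le,
    Nat.add_mod_right, Nat.mod_eq_of_lt hi]

theorem add_mod_inj (hi : i < k) (hj : j < k) : (i + o) % k = (j + o) % k ↔ i = j := by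
  refine ⟨fun heq => ?_, fun heq => heq ▸ rfl⟩
  exact (Nat.ModEq.add_right_cancel' o heq).eq_of_lt_of_lt hi hj

theorem add_mod_lt_iff (hi : i < k) (hj : j < k) (hpos : (j + o) % k = h) (hhj : h ≤ j) :
    (i + o) % k < h ↔ i < j ∧ j ≤ i + h := by
  have ho : o % k < k := Nat.mod_lt _ (by omega)
  rw [Nat.add_mod_eq_ite, Nat.mod_eq_of_lt hj] at hpos
  rw [Nat.add_mod_eq_ite, Nat.mod_eq_of_lt hi]
  split_ifs at * <;> omega

theorem last_add_mod_lt (hj : j < k) (hpos : (j + o) % k = h) (hjh : j < h) :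
    (k - 1 + o) % k < h := by
  have ho : o % k < k := Nat.mod_lt _ (by omega)
  rw [Nat.add_mod_eq_ite, Nat.mod_eq_of_lt hj] at hpos
  rw [Nat.add_mod_eq_ite, Nat.mod_eq_of_lt (by omega)]
  split_ifs at * <;> omega

end Rotation

section Counter

/-- The state of token `i` when the counter shows the digits `d` and the tokens have been rotated
by `o`. The tokens below `h` are in the states `C`; their digits are ignored. -/
def counterToken (h m k : ℕ) (d : ℕ → ℕ) (o i : ℕ) : ℕ × ℕ :=
  (if i < h then m else d i, (i + o) % k)

/-- The states occupied by the `k` tokens of a counter. -/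
def counterStates (h m k : ℕ) (d : ℕ → ℕ) (o : ℕ) : Set (ℕ × ℕ) :=
  counterToken h m k d o '' Set.Iio k

/-- The digits after the digit `j` was incremented at the cost of resetting the `h` digits
below it. -/
def carry (h : ℕ) (d : ℕ → ℕ) (j i : ℕ) : ℕ :=
  if i = j then d j + 1 else if i < j ∧ j ≤ i + h then 0 else d i

variable {h m k : ℕ} {d : ℕ → ℕ} {o i j : ℕ}

theorem carry_self : carry h d j j = d j + 1 := if_pos rfl

theorem carry_of_lt (hij : j < i) : carry h d j i = d i := by
  rw [carry, if_neg (by omega), if_neg (by omega)]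

theorem carry_lt (hd : ∀ i, d i < m) (hj : d j + 1 < m) (i : ℕ) : carry h d j i < m := by
  have := hd i
  unfold carry
  split_ifs <;> omega

theorem phmNatDelta_c_counterToken :
    phmNatDelta h m k (counterToken h m k d o i) PSym.c =
      some (counterToken h m k d (o + 1) i) := by
  simp only [phmNatDelta, counterToken, Nat.mod_add_mod, Nat.add_assoc]

theorem phmNatDelta_s_eq_counterToken (t : ℕ) (hi : i < k) :
    phmNatDelta h m k (t, i) PSym.s = some (counterToken h m k 0 0 i) := by
  simp only [phmNatDelta, counterToken, Nat.add_zero, Nat.mod_eq_of_lt hi, Pi.zero_apply]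

theorem phmNatDelta_r_counterToken (hhj : h ≤ j) (hj : j < k) (hpos : (j + o) % k = h)
    (hlt : d j + 1 < m) (hfull : ∀ i, h ≤ i → i < j → j ≤ i + h → d i = m - 1) (hi : i < k) :
    phmNatDelta h m k (counterToken h m k d o i) PSym.r =
      some (counterToken h m k (carry h d j) o i) := by
  have hwindow := add_mod_lt_iff hi hj hpos hhj
  have hself : (i + o) % k = h ↔ i = j := hpos ▸ add_mod_inj hi hj
  have hfull_i := hfull i
  simp only [phmNatDelta, counterToken, carry, hwindow, hself]
  grind

/-- Some word turns the digits `d` into `d'` and brings every token back to its place. -/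
def CounterReaches (h m k : ℕ) (d d' : ℕ → ℕ) : Prop :=
  ∃ w, ∀ i < k, pfaRun (phmNatDelta h m k) (counterToken h m k d 0 i) w =
    some (counterToken h m k d' 0 i)

theorem CounterReaches.of_eqOn {d d' : ℕ → ℕ} (hd : Set.EqOn d d' (Set.Ici h)) :
    CounterReaches h m k d d' := by
  refine ⟨[], fun i _ => ?_⟩
  unfold counterToken
  split_ifs with hi
  · rfl
  · rw [hd (not_lt.1 hi), pfaRun_nil]

theorem CounterReaches.trans {d₁ d₂ d₃ : ℕ → ℕ} (h₁₂ : CounterReaches h m k d₁ d₂)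
    (h₂₃ : CounterReaches h m k d₂ d₃) : CounterReaches h m k d₁ d₃ := by
  obtain ⟨u, hu⟩ := h₁₂
  obtain ⟨v, hv⟩ := h₂₃
  exact ⟨u ++ v, fun i hi => by rw [pfaRun_append, hu i hi, Option.bind_some, hv i hi]⟩

theorem pfaRun_replicate_c_counterToken (n : ℕ) :
    pfaRun (phmNatDelta h m k) (counterToken h m k d o i) (List.replicate n PSym.c) =
      some (counterToken h m k d (o + n) i) := by
  induction n generalizing o with
  | zero => rfl
  | succ n ih =>
    rw [List.replicate_succ, pfaRun_cons, phmNatDelta_c_counterToken, Option.bind_some, ih,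
      Nat.add_right_comm, Nat.add_assoc]

theorem counterReaches_carry (hhj : h ≤ j) (hj : j < k) (hlt : d j + 1 < m)
    (hfull : ∀ i, h ≤ i → i < j → d i = m - 1) : CounterReaches h m k d (carry h d j) := by
  refine ⟨List.replicate (k + h - j) PSym.c ++ PSym.r :: List.replicate (j - h) PSym.c,
    fun i hi => ?_⟩
  have hpos : (j + (0 + (k + h - j))) % k = h := by
    rw [show j + (0 + (k + h - j)) = h + k by omega, Nat.add_mod_right,
      Nat.mod_eq_of_lt (by omega)]
  have hperiod : 0 + (k + h - j) + (j - h) = k := by omega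
  rw [pfaRun_append, pfaRun_replicate_c_counterToken, Option.bind_some, pfaRun_cons,
    phmNatDelta_r_counterToken hhj hj hpos hlt (fun i hhi hij _ => hfull i hhi hij) hi,
    Option.bind_some, pfaRun_replicate_c_counterToken, hperiod]
  simp only [counterToken, Nat.add_mod_right, Nat.add_zero]

end Counter

section LowerBound

/-- The recurrence and the initial values that determine `f_{h,m}` on the positive integers. -/
structure IsPHMLength (h m : ℕ) (f : ℕ → ℕ) : Prop where
  eq_zero : ∀ j, 1 ≤ j → j ≤ h → f j = 0
  eq_mul : ∀ j, h + 1 ≤ j → f j = (m - 1) * (1 + ∑ i ∈ Finset.Icc 1 h, f (j - i))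

/-- The number of symbols `r` that one increment of the digit `i` accounts for, refilling the
digits that it resets included. -/
def digitWeight (h : ℕ) (f : ℕ → ℕ) (i : ℕ) : ℕ := 1 + ∑ t ∈ Finset.Icc 1 h, f (i + 1 - t)

/-- The value of a counter showing the digits `d`, which is the number of symbols `r` needed to
count up to it. -/
def counterValue (h k : ℕ) (f d : ℕ → ℕ) : ℕ := ∑ i ∈ Finset.Ico h k, d i * digitWeight h f i

variable {h m k : ℕ} {f d : ℕ → ℕ} {o j : ℕ}

theorem IsPHMLength.succ_eq_mul_digitWeight (hf : IsPHMLength h m f) {i : ℕ} (hi : h ≤ i) :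
    f (i + 1) = (m - 1) * digitWeight h f i :=
  hf.eq_mul (i + 1) (Nat.succ_le_succ hi)

theorem counterValue_zero : counterValue h k f 0 = 0 := by
  simp only [counterValue, Pi.zero_apply, zero_mul, Finset.sum_const_zero]

theorem sum_Icc_sub_eq_sum_Ico (hhj : h ≤ j) :
    ∑ t ∈ Finset.Icc 1 h, f (j + 1 - t) = ∑ i ∈ Finset.Ico (j - h) j, f (i + 1) := by
  rw [← Finset.Ico_add_one_right_eq_Icc, Finset.sum_Ico_reflect f 1 (by omega : h + 1 ≤ j + 1 + 1),
    Finset.sum_Ico_add']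
  congr 2
  omega

theorem IsPHMLength.sum_window (hf : IsPHMLength h m f) (hhj : h ≤ j) (hj : j < k) :
    ∑ i ∈ Finset.Ico h k, (if i < j ∧ j ≤ i + h then f (i + 1) else 0) =
      ∑ t ∈ Finset.Icc 1 h, f (j + 1 - t) := by
  rw [sum_Icc_sub_eq_sum_Ico hhj, ← Finset.sum_filter]
  refine Finset.sum_subset (fun i hi => ?_) (fun i hi hi' => ?_)
  · simp only [Finset.mem_filter, Finset.mem_Ico] at hi ⊢
    omega
  · simp only [Finset.mem_filter, Finset.mem_Ico] at hi hi'
    exact hf.eq_zero _ (by omega) (by omega)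

theorem IsPHMLength.counterValue_carry (hf : IsPHMLength h m f) (hhj : h ≤ j) (hj : j < k)
    (hfull : ∀ i, h ≤ i → i < j → j ≤ i + h → d i = m - 1) :
    counterValue h k f (carry h d j) = counterValue h k f d + 1 := by
  have hdigit : ∀ i ∈ Finset.Ico h k,
      carry h d j i * digitWeight h f i + (if i < j ∧ j ≤ i + h then f (i + 1) else 0) =
        d i * digitWeight h f i + (if i = j then digitWeight h f j else 0) := by
    intro i hi
    have hhi : h ≤ i := (Finset.mem_Ico.1 hi).1
    rcases eq_or_ne i j with rfl | hij
    · simp only [carry_self, lt_irrefl, false_and, if_false, if_true, add_zero, add_one_mul]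
    · by_cases hw : i < j ∧ j ≤ i + h
      · simp only [carry, if_neg hij, if_pos hw, hfull i hhi hw.1 hw.2,
          hf.succ_eq_mul_digitWeight hhi, zero_mul, zero_add, add_zero]
      · simp only [carry, if_neg hij, if_neg hw]
  have hsum := Finset.sum_congr rfl hdigit
  rw [Finset.sum_add_distrib, Finset.sum_add_distrib, hf.sum_window hhj hj, Finset.sum_ite_eq',
    if_pos (Finset.mem_Ico.2 ⟨hhj, hj⟩), digitWeight, ← add_assoc] at hsum
  exact Nat.add_right_cancel hsum

theorem IsPHMLength.le_counterValue_of_last (hf : IsPHMLength h m f) (hk : h < k)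
    (hlast : d (k - 1) = m - 1) : f k ≤ counterValue h k f d := by
  calc f k = f (k - 1 + 1) := by rw [Nat.sub_add_cancel (by omega)]
    _ = d (k - 1) * digitWeight h f (k - 1) := by
      rw [hf.succ_eq_mul_digitWeight (by omega), hlast]
    _ ≤ counterValue h k f d :=
      Finset.single_le_sum (f := fun i => d i * digitWeight h f i) (fun _ _ => Nat.zero_le _)
        (Finset.mem_Ico.2 (by omega))

theorem last_full_or_exists_carry (hk : h < k) (hd : ∀ i, d i < m)
    (hr : ∀ q ∈ counterStates h m k d o, (phmNatDelta h m k q PSym.r).isSome) :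
    d (k - 1) = m - 1 ∨ ∃ j, h ≤ j ∧ j < k ∧ (j + o) % k = h ∧ d j + 1 < m ∧
      ∀ i, h ≤ i → i < j → j ≤ i + h → d i = m - 1 := by
  have hdefined : ∀ i, h ≤ i → i < k →
      (phmNatDelta h m k (d i, (i + o) % k) PSym.r).isSome := fun i hhi hi => by
    simpa only [counterToken, if_neg hhi.not_gt] using hr _ (Set.mem_image_of_mem _ hi)
  have hfull_of_lt : ∀ i, h ≤ i → i < k → (i + o) % k < h → d i = m - 1 := fun i hhi hi hlt =>
    (isSome_phmNatDelta_r_of_lt (hd i) hlt).1 (hdefined i hhi hi)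
  obtain ⟨j, hj, hpos⟩ := exists_add_mod_eq hk o
  rcases lt_or_ge j h with hjh | hhj
  · exact .inl (hfull_of_lt _ (by omega) (by omega) (last_add_mod_lt hj hpos hjh))
  · refine .inr ⟨j, hhj, hj, hpos, ?_, fun i hhi hij hji => ?_⟩
    · exact (isSome_phmNatDelta_r_self (hd j)).1 (hpos ▸ hdefined j hhj hj)
    · exact hfull_of_lt i hhi (by omega) ((add_mod_lt_iff (by omega) hj hpos hhj).2 ⟨hij, hji⟩)

theorem not_subsingleton_counterStates (hk : 1 < k) :
    ¬ (counterStates h m k d o).Subsingleton := fun hS => by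
  have hpos := congrArg Prod.snd (hS (Set.mem_image_of_mem _ (Set.mem_Iio.2 (by omega : 0 < k)))
    (Set.mem_image_of_mem _ (Set.mem_Iio.2 hk)))
  exact zero_ne_one ((add_mod_inj (by omega) hk).1 hpos)

theorem IsCareSyncWordOn.counterStates_of_s {w : List PSym}
    (hw : IsCareSyncWordOn (phmNatDelta h m k) (counterStates h m k d o) (PSym.s :: w)) :
    IsCareSyncWordOn (phmNatDelta h m k) (counterStates h m k 0 0) w := by
  refine hw.tail ?_
  rintro _ ⟨i, hi, rfl⟩
  obtain ⟨j, hj, hpos⟩ := exists_add_mod_eq hi o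
  refine ⟨_, Set.mem_image_of_mem _ hj, ?_⟩
  rw [counterToken, hpos, phmNatDelta_s_eq_counterToken _ hi]

theorem IsPHMLength.le_counterValue_add_count (hf : IsPHMLength h m f) (hh : 0 < h) (hk : h < k)
    (hd : ∀ i, d i < m) {w : List PSym}
    (hw : IsCareSyncWordOn (phmNatDelta h m k) (counterStates h m k d o) w) :
    f k ≤ counterValue h k f d + w.count PSym.r := by
  induction w generalizing d o with
  | nil => exact absurd hw.subsingleton (not_subsingleton_counterStates (by omega))
  | cons a w ih =>
    cases a with
    | c =>
      have hrest := ih hd (hw.tail (S' := counterStates h m k d (o + 1))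
        (Set.forall_mem_image.2 fun i hi =>
          ⟨_, Set.mem_image_of_mem _ hi, phmNatDelta_c_counterToken⟩))
      rwa [List.count_cons_of_ne (by decide)]
    | s =>
      have hrest := ih (d := 0) (fun i => Nat.zero_lt_of_lt (hd i)) hw.counterStates_of_s
      rw [counterValue_zero] at hrest
      rw [List.count_cons_of_ne (by decide)]
      omega
    | r =>
      rcases last_full_or_exists_carry hk hd fun q hq => hw.isSome hq with
        hlast | ⟨j, hhj, hj, hpos, hlt, hfull⟩
      · exact (hf.le_counterValue_of_last hk hlast).trans (Nat.le_add_right _ _)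
      · have hrest := ih (carry_lt hd hlt) (hw.tail (S' := counterStates h m k (carry h d j) o)
          (Set.forall_mem_image.2 fun i hi => ⟨_, Set.mem_image_of_mem _ hi,
            phmNatDelta_r_counterToken hhj hj hpos hlt hfull hi⟩))
        rw [hf.counterValue_carry hhj hj hfull] at hrest
        rw [List.count_cons_self]
        omega

theorem counterStates_subset (hd : ∀ i, d i < m) :
    counterStates h m k d o ⊆ Set.Iio (m + 1) ×ˢ Set.Iio k := by
  rintro _ ⟨i, hi, rfl⟩
  have := hd i
  refine ⟨?_, Nat.mod_lt _ (Nat.zero_lt_of_lt hi)⟩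
  simp only [counterToken, Set.mem_Iio]
  split_ifs <;> omega

theorem IsPHMLength.le_count_of_isCareSyncWordOn (hf : IsPHMLength h m f) (hh : 0 < h) (hm : 0 < m)
    (hk : h < k) {w : List PSym}
    (hw : IsCareSyncWordOn (phmNatDelta h m k) (Set.Iio (m + 1) ×ˢ Set.Iio k) w) :
    f k ≤ w.count PSym.r := by
  have hbound := hf.le_counterValue_add_count hh hk (d := 0) (o := 0) (fun _ => hm)
    (hw.mono (counterStates_subset fun _ => hm))
  rwa [counterValue_zero, zero_add] at hbound

end LowerBound

section Existence

/-- The digits `d` with all those below `j` raised to `m - 1`. -/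
def fillBelow (m j : ℕ) (d : ℕ → ℕ) (i : ℕ) : ℕ := if i < j then m - 1 else d i

variable {h m k : ℕ} {d : ℕ → ℕ} {j : ℕ}

theorem fillBelow_of_lt {i : ℕ} (hij : i < j) : fillBelow m j d i = m - 1 := if_pos hij

theorem fillBelow_of_le {i : ℕ} (hij : j ≤ i) : fillBelow m j d i = d i := if_neg hij.not_gt

theorem fillBelow_lt (hd : ∀ i, d i < m) (i : ℕ) : fillBelow m j d i < m := by
  have := hd i
  unfold fillBelow
  split_ifs <;> omega

theorem counterReaches_fillBelow (hhj : h ≤ j) (hj : j ≤ k) (hd : ∀ i, d i < m) :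
    CounterReaches h m k d (fillBelow m j d) := by
  induction j, hhj using Nat.le_induction generalizing d with
  | base => exact .of_eqOn fun i hi => (fillBelow_of_le hi).symm
  | succ j hhj ih =>
    induction hn : m - 1 - d j generalizing d with
    | zero =>
      have hfill : fillBelow m (j + 1) d = fillBelow m j d := by
        have := hd j
        funext i
        unfold fillBelow
        grind
      exact hfill ▸ ih (by omega) hd
    | succ n ihn =>
      set e := carry h (fillBelow m j d) j with he
      have hjself : fillBelow m j d j = d j := fillBelow_of_le le_rfl
      have hlt : fillBelow m j d j + 1 < m := by omega
      have hcarry : CounterReaches h m k (fillBelow m j d) e :=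
        counterReaches_carry hhj (by omega) hlt fun i _ hij => fillBelow_of_lt hij
      have hej : e j = d j + 1 := by rw [he, carry_self, hjself]
      have hfill : fillBelow m (j + 1) e = fillBelow m (j + 1) d := by
        funext i
        rcases lt_or_ge i (j + 1) with hi | hi
        · rw [fillBelow_of_lt hi, fillBelow_of_lt hi]
        · rw [fillBelow_of_le hi, fillBelow_of_le hi, he, carry_of_lt hi,
            fillBelow_of_le (Nat.le_of_succ_le hi)]
      have hrest : CounterReaches h m k e (fillBelow m (j + 1) e) :=
        ihn (carry_lt (fillBelow_lt hd) hlt) (by omega)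
      exact hfill ▸ ((ih (by omega) hd).trans hcarry).trans hrest

/-- The cyclic shift of the indices modified so as to get stuck at `h - 1`. -/
def gatherShift (h k i : ℕ) : ℕ := if i + 1 = h then i else if i + 1 = k then 0 else i + 1

theorem mapsTo_gatherShift : Set.MapsTo (gatherShift h k) (Set.Iio k) (Set.Iio k) := fun i hi => by
  simp only [gatherShift, Set.mem_Iio] at hi ⊢
  split_ifs <;> omega

theorem gatherShift_iterate_eq (hh : 0 < h) (hk : h ≤ k) {n i : ℕ} (hi : i < k)
    (hn : (if i < h then h - 1 - i else h - 1 + k - i) ≤ n) : (gatherShift h k)^[n] i = h - 1 := by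
  induction n generalizing i with
  | zero => rw [Function.iterate_zero_apply]; split_ifs at hn <;> omega
  | succ n ih =>
    rw [Function.iterate_succ_apply]
    refine ih (mapsTo_gatherShift hi) ?_
    unfold gatherShift
    split_ifs at hn ⊢ <;> omega

theorem phmNatDelta_r_fullCounter (hh : 0 < h) (hk : h < k) {i : ℕ} (hi : i < k)
    (hfull : d i = m - 1) :
    (phmNatDelta h m k (counterToken h m k d 1 i) PSym.r).map Prod.snd =
      some (gatherShift h k i) := by
  have hpos : (i + 1) % k = if i + 1 = k then 0 else i + 1 := by
    split_ifs with hlast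
    · rw [hlast, Nat.mod_self]
    · exact Nat.mod_eq_of_lt (by omega)
  simp only [phmNatDelta, counterToken, gatherShift, hpos, hfull]
  grind

theorem exists_pfaRun_eq_gatherShift (hh : 0 < h) (hm : 0 < m) (hk : h < k) :
    ∃ w, ∀ q : ℕ × ℕ, q.2 ∈ Set.Iio k →
      (pfaRun (phmNatDelta h m k) q w).map Prod.snd = some (gatherShift h k q.2) := by
  obtain ⟨u, hu⟩ := counterReaches_fillBelow (d := 0) hk.le le_rfl fun _ => hm
  refine ⟨PSym.s :: (u ++ [PSym.c, PSym.r]), fun ⟨t, i⟩ hi => ?_⟩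
  rw [pfaRun_cons, phmNatDelta_s_eq_counterToken t hi, Option.bind_some, pfaRun_append, hu i hi,
    Option.bind_some, pfaRun_cons, phmNatDelta_c_counterToken, Option.bind_some]
  exact phmNatDelta_r_fullCounter hh hk hi (fillBelow_of_lt hi)

theorem exists_isCareSyncWordOn (hh : 0 < h) (hm : 0 < m) (hk : h < k) :
    ∃ w, IsCareSyncWordOn (phmNatDelta h m k) (Set.Iio (m + 1) ×ˢ Set.Iio k) w := by
  obtain ⟨w, hw⟩ := exists_pfaRun_eq_gatherShift hh hm hk
  refine ⟨(List.replicate k w).flatten ++ [PSym.s], counterToken h m k 0 0 (h - 1), ?_⟩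
  rintro q ⟨-, hq⟩
  have hgather := pfaRun_flatten_replicate_map mapsTo_gatherShift hw k hq
  rw [gatherShift_iterate_eq hh hk.le hq (by split_ifs <;> omega)] at hgather
  obtain ⟨⟨t, i⟩, hrun, rfl : i = h - 1⟩ := Option.map_eq_some_iff.1 hgather
  rw [pfaRun_append, hrun, Option.bind_some]
  exact phmNatDelta_s_eq_counterToken t (by omega)

end Existence

/-- For `h ≥ 2`, `m ≥ 2` and `k ≥ h+1`, the PFA `P_{h,m}^n` on `n = (m+1)k` states is
carefully synchronizing, and its shortest carefully synchronizing word has length at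
least `f_{h,m}(k)`, where `f_{h,m}(k) = 0` for `1 ≤ k ≤ h` and
`f_{h,m}(k) = (m−1)·(1 + Σ_{j=1}^{h} f_{h,m}(k−j))` for `k ≥ h+1`. -/
theorem PHM_care_sync (h m k : ℕ) (hh : 2 ≤ h) (hm : 2 ≤ m) (hk : h + 1 ≤ k)
    (f : ℕ → ℕ)
    (hf0 : ∀ j : ℕ, 1 ≤ j → j ≤ h → f j = 0)
    (hfrec : ∀ j : ℕ, h + 1 ≤ j →
      f j = (m - 1) * (1 + ∑ i ∈ Finset.Icc 1 h, f (j - i))) :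
    (∃ w : List PSym, IsCareSyncWord (PHMdelta h m k hh hm hk) w) ∧
      ∀ w : List PSym, IsCareSyncWord (PHMdelta h m k hh hm hk) w → f k ≤ w.length := by
  simp only [isCareSyncWord_PHMdelta_iff]
  have hf : IsPHMLength h m f := ⟨hf0, hfrec⟩
  refine ⟨exists_isCareSyncWordOn (by omega) (by omega) hk, fun w hw => ?_⟩
  exact (hf.le_count_of_isCareSyncWordOn (by omega) (by omega) hk hw).trans List.count_le_length
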